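/- Let n ≥ 3 and let A, B be mutually orthogonal n×n normal matrices over R = {0, −1}. Then for every i ∈ [n], the total number of off-diagonal zero entries in the i-th row of A plus the i-th row of B is at least 2, i.e., #{j ≠ i : A_{ij} = 0} + #{j ≠ i : B_{ij} = 0} ≥ 2. -/

import Mathlib

/-- A matrix over `R = {0,-1} ⊆ ℤ` is normal: zero diagonal, entries `0` or `-1`. -/
def IsNormal {n : ℕ} (A : Matrix (Fin n) (Fin n) ℤ) : Prop :=
  (∀ i, A i i = 0) ∧ ∀ i j, A i j = 0 ∨ A i j = -1

/-- Tropical (max-plus) matrix product: `(A⊙B) i j = max_k (A i k + B k j)`. -/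
noncomputable def tropMul {n : ℕ} (A B : Matrix (Fin n) (Fin n) ℤ) :
    Matrix (Fin n) (Fin n) ℤ :=
  Matrix.of fun i j => sSup (Set.range fun k => A i k + B k j)

/-- Tropical sum: entrywise maximum. -/
def tropSum {n : ℕ} (A B : Matrix (Fin n) (Fin n) ℤ) : Matrix (Fin n) (Fin n) ℤ :=
  Matrix.of fun i j => max (A i j) (B i j)

/-- Number of off-diagonal zero entries in the `i`-th row of `A`. -/
def rowZeros {n : ℕ} (A : Matrix (Fin n) (Fin n) ℤ) (i : Fin n) : ℕ :=
  (Finset.univ.filter (fun j => j ≠ i ∧ A i j = 0)).card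

/-!
Since the entries are nonpositive, `(A ⊙ B) i j = 0` says that `A i k = B k j = 0` for some `k`.
If row `i` of `A` has no off-diagonal zero, the witness is always `k = i`, so row `i` of `B`
vanishes and has `n - 1 ≥ 2` off-diagonal zeros. By symmetry the only other possibility is that
both rows have at least one.
-/

section

variable {n : ℕ} {A B : Matrix (Fin n) (Fin n) ℤ} {i j : Fin n}

theorem exists_add_eq_tropMul (A B : Matrix (Fin n) (Fin n) ℤ) (i j : Fin n) :
    ∃ k, A i k + B k j = tropMul A B i j :=
  Int.csSup_mem (Set.nonempty_of_mem (Set.mem_range_self i)) (Set.finite_range _).bddAbove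

theorem exists_eq_zero_of_tropMul_eq_zero (hA : ∀ k, A i k ≤ 0) (hB : ∀ k, B k j ≤ 0)
    (h : tropMul A B i j = 0) : ∃ k, A i k = 0 ∧ B k j = 0 := by
  obtain ⟨k, hk⟩ := exists_add_eq_tropMul A B i j
  have hAk := hA k
  have hBk := hB k
  exact ⟨k, by omega, by omega⟩

theorem rowZeros_eq_zero_iff : rowZeros A i = 0 ↔ ∀ j, A i j = 0 → j = i := by
  simp only [rowZeros, Finset.card_eq_zero, Finset.filter_eq_empty_iff, Finset.mem_univ,
    true_imp_iff, not_and', not_not]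

theorem rowZeros_eq_sub_one (h : ∀ j ≠ i, A i j = 0) : rowZeros A i = n - 1 := by
  have zeros_eq : Finset.univ.filter (fun j => j ≠ i ∧ A i j = 0) = Finset.univ.erase i := by
    ext j
    simpa using h j
  rw [rowZeros, zeros_eq, Finset.card_erase_of_mem (Finset.mem_univ i), Finset.card_fin]

theorem rowZeros_right_eq_sub_one_of_rowZeros_left_eq_zero
    (hA : ∀ k, A i k ≤ 0) (hB : ∀ k j, B k j ≤ 0) (h : ∀ j, tropMul A B i j = 0)
    (hzero : rowZeros A i = 0) : rowZeros B i = n - 1 := by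
  refine rowZeros_eq_sub_one fun j _ => ?_
  obtain ⟨k, hAk, hBk⟩ := exists_eq_zero_of_tropMul_eq_zero hA (hB · j) (h j)
  obtain rfl : k = i := rowZeros_eq_zero_iff.mp hzero k hAk
  exact hBk

theorem IsNormal.apply_nonpos (hA : IsNormal A) (i j : Fin n) : A i j ≤ 0 := by
  rcases hA.2 i j with h | h <;> simp [h]

end

theorem stmt_8_general {n : ℕ} (hn : 3 ≤ n) {A B : Matrix (Fin n) (Fin n) ℤ} {i : Fin n}
    (hA : ∀ k j, A k j ≤ 0) (hB : ∀ k j, B k j ≤ 0)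
    (hAB : ∀ j, tropMul A B i j = 0) (hBA : ∀ j, tropMul B A i j = 0) :
    2 ≤ rowZeros A i + rowZeros B i := by
  have full_of_left : rowZeros A i = 0 → rowZeros B i = n - 1 :=
    rowZeros_right_eq_sub_one_of_rowZeros_left_eq_zero (hA i) hB hAB
  have full_of_right : rowZeros B i = 0 → rowZeros A i = n - 1 :=
    rowZeros_right_eq_sub_one_of_rowZeros_left_eq_zero (hB i) hA hBA
  omega

theorem stmt_8 {n : ℕ} (hn : 3 ≤ n) (A B : Matrix (Fin n) (Fin n) ℤ)
    (hA : IsNormal A) (hB : IsNormal B)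
    (h1 : tropMul A B = 0) (h2 : tropMul B A = 0) :
    ∀ i : Fin n, 2 ≤ rowZeros A i + rowZeros B i := by
  exact fun i => stmt_8_general hn hA.apply_nonpos hB.apply_nonpos
    (fun j => congrFun₂ h1 i j) (fun j => congrFun₂ h2 i j)
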